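/- arXiv:0908.4562 — 2 statements merged into one kernel-verified Lean document; each statement's English description precedes it below -/
import Mathlib

section
/- Let p be a prime, n ≥ 0, q = p^{n+1}, and let b be a positive integer coprime to p. Set d_a = ⌊(1+a)·b/q⌋ for 0 ≤ a ≤ q−1 and w_j = min{ d_{a+j} − d_a : 0 ≤ a ≤ q−1, a ⪯ q−1−j }. Then w_j = d_j − d_0 for all 0 ≤ j ≤ q−1 if and only if r(−b) + r(−ib) − r(−hb) > 0 for all integers h, i, j with 0 ≤ h ≤ i ≤ j < q satisfying i + j = q − 1 + h and binomial(i,h) ≢ 0 (mod p). -/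
/-!
Write `q = p^(n+1)`. Since `a = 0` is always admissible in the minimum defining `w_j`, the
left-hand side says that `d_j - d_0 ≤ d_{a+j} - d_a` whenever `a ⪯ q-1-j`.

Put `i = q-1-j` and `h = i-a`. As `-ib ≡ (1+j)b` and `-hb ≡ (1+a+j)b` modulo `q`, and
`r(-b) = q - r(b)` because `q ∤ b`, one finds
`r(-b) + r(-ib) - r(-hb) = q·(1 + d_{a+j} - d_a - d_j + d_0) - r((1+a)b)`,
which is positive exactly when the inequality for `(a, j)` holds (`dSeq_le_iff`).

By Lucas' theorem, `a ⪯ i` means `p ∤ binomial(i,a) = binomial(i,h)` (`pLE_iff_not_dvd_choose`).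
The third index of the residue condition is `q-1-a`, so `i ≤ q-1-a` becomes `a ≤ j`. This restriction
is harmless: the inequality is symmetric in `a` and `j`, and so is admissibility, because
`binomial(q-1,j)·binomial(q-1-j,a)` is a symmetric trinomial coefficient whose first factor is prime
to `p` (`not_dvd_choose_swap`).
-/

/-- The `s`-th digit in the base-`p` expansion of the natural number `x`. -/
def digit (p x s : ℕ) : ℕ := x / p ^ s % p

/-- The partial order `x ⪯ y` on non-negative integers determined by `q = p^(n+1)`:
`x ⪯ y` iff every base-`p` digit of `x` (up to position `n`) is at most the
corresponding digit of `y`. -/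
def pLE (p n x y : ℕ) : Prop := ∀ s ≤ n, digit p x s ≤ digit p y s

/-- `d_a = ⌊(1+a)·b/q⌋`. -/
def dSeq (q : ℕ) (b : ℤ) (a : ℕ) : ℤ := Int.fdiv ((1 + a) * b) q

/-- `w_j = min { d_{a+j} - d_a : 0 ≤ a ≤ q - 1, a ⪯ q - 1 - j }` where `q = p^(n+1)`. -/
noncomputable def wSeq (p n : ℕ) (b : ℤ) (j : ℕ) : ℤ :=
  sInf {m : ℤ | ∃ a : ℕ, a ≤ p ^ (n + 1) - 1 ∧ pLE p n a (p ^ (n + 1) - 1 - j) ∧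
    m = dSeq (p ^ (n + 1)) b (a + j) - dSeq (p ^ (n + 1)) b a}

lemma not_dvd_choose_of_lt {p m k : ℕ} (hp : p.Prime) (hm : m < p) :
    ¬ p ∣ m.choose k ↔ k ≤ m := by
  constructor
  · intro h
    by_contra hk
    exact h (by rw [Nat.choose_eq_zero_of_lt (by omega)]; exact dvd_zero p)
  · intro hk hd
    have h1 : p ∣ m.factorial := by
      rw [← Nat.choose_mul_factorial_mul_factorial hk, mul_assoc]
      exact hd.mul_right _
    have := (hp.dvd_factorial).1 h1
    omega

lemma pLE_iff_not_dvd_choose {p n a i : ℕ} (hp : p.Prime) (ha : a < p ^ (n + 1))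
    (hi : i < p ^ (n + 1)) : pLE p n a i ↔ ¬ p ∣ i.choose a := by
  have := Fact.mk hp
  have hl := Choose.lucas_theorem_nat (p := p) hi ha
  rw [hl.dvd_iff dvd_rfl, hp.prime.dvd_finsetProd_iff]
  simp only [not_exists, not_and, Finset.mem_range, Nat.lt_succ_iff]
  refine forall₂_congr fun s _ => ?_
  exact (not_dvd_choose_of_lt hp (Nat.mod_lt _ hp.pos)).symm

lemma not_dvd_choose_pow_sub_one {p n : ℕ} (hp : p.Prime) {k : ℕ} (hk : k ≤ p ^ (n + 1) - 1) :
    ¬ p ∣ (p ^ (n + 1) - 1).choose k := by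
  induction k with
  | zero => simpa using hp.ne_one
  | succ k ih =>
    intro hd
    apply ih (by omega)
    have hq : 0 < p ^ (n + 1) := pow_pos hp.pos _
    have h1 : p ∣ (p ^ (n + 1)).choose (k + 1) :=
      hp.dvd_choose_pow (by omega) (by omega)
    have h2 : (p ^ (n + 1)).choose (k + 1)
        = (p ^ (n + 1) - 1).choose k + (p ^ (n + 1) - 1).choose (k + 1) := by
      conv_lhs => rw [show p ^ (n + 1) = p ^ (n + 1) - 1 + 1 by omega]
      exact Nat.choose_succ_succ _ _
    rw [h2] at h1
    exact (Nat.dvd_add_left hd).1 h1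

lemma not_dvd_choose_swap {p n a j : ℕ} (hp : p.Prime) (haj : a + j ≤ p ^ (n + 1) - 1)
    (h : ¬ p ∣ (p ^ (n + 1) - 1 - j).choose a) : ¬ p ∣ (p ^ (n + 1) - 1 - a).choose j := by
  intro hd
  have e1 := Nat.choose_mul (n := p ^ (n + 1) - 1) (k := a + j) (s := j) (by omega)
  have e2 := Nat.choose_mul (n := p ^ (n + 1) - 1) (k := a + j) (s := a) (by omega)
  rw [Nat.add_sub_cancel] at e1
  rw [Nat.add_sub_cancel_left] at e2
  have e3 : (a + j).choose j = (a + j).choose a := by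
    rw [← Nat.choose_symm (Nat.le_add_left j a), Nat.add_sub_cancel]
  have e4 : (p ^ (n + 1) - 1).choose j * (p ^ (n + 1) - 1 - j).choose a
      = (p ^ (n + 1) - 1).choose a * (p ^ (n + 1) - 1 - a).choose j := by
    rw [← e1, ← e2, e3]
  have h5 : p ∣ (p ^ (n + 1) - 1).choose j * (p ^ (n + 1) - 1 - j).choose a := by
    rw [e4]; exact hd.mul_left _
  rcases hp.dvd_mul.1 h5 with h6 | h6
  · exact not_dvd_choose_pow_sub_one hp (by omega) h6
  · exact h h6

lemma dSeq_eq_ediv (q : ℕ) (b : ℤ) (a : ℕ) : dSeq q b a = ((1 + a) * b) / q :=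
  Int.fdiv_eq_ediv_of_nonneg _ (Int.natCast_nonneg q)

/-- The inequality between floors is equivalent to positivity of the residue expression at
`i = q-1-j`, `h = q-1-j-a`. -/
lemma dSeq_le_iff {q b a j h i : ℕ} (hqb : ¬ q ∣ b) (hq : 0 < q)
    (hi : i + j + 1 = q) (hh : h + a = i) :
    dSeq q b j - dSeq q b 0 ≤ dSeq q b (a + j) - dSeq q b a ↔
      0 < (-(b : ℤ)) % (q : ℤ) + (-((i : ℤ) * (b : ℤ))) % (q : ℤ)
        - (-((h : ℤ) * (b : ℤ))) % (q : ℤ) := by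
  have hq' : (0 : ℤ) < q := by exact_mod_cast hq
  have hqz : (i : ℤ) + j + 1 = q := by exact_mod_cast hi
  have hhz : (h : ℤ) + a = i := by exact_mod_cast hh
  have ei : (-((i : ℤ) * b)) % (q : ℤ) = ((1 + (j : ℤ)) * b) % q := by
    rw [show -((i : ℤ) * b) = (1 + (j : ℤ)) * b + q * (-b) by rw [← hqz]; ring,
      Int.add_mul_emod_self_left]
  have eh : (-((h : ℤ) * b)) % (q : ℤ) = ((1 + ((a + j : ℕ) : ℤ)) * b) % q := by
    rw [show -((h : ℤ) * b) = (1 + ((a + j : ℕ) : ℤ)) * b + q * (-b) by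
      rw [← hqz, ← hhz]; push_cast; ring, Int.add_mul_emod_self_left]
  have hb0 : (b : ℤ) % q ≠ 0 := fun h0 =>
    hqb (by exact_mod_cast Int.dvd_of_emod_eq_zero h0)
  have hbpos : 0 < (b : ℤ) % q := lt_of_le_of_ne (Int.emod_nonneg _ hq'.ne') hb0.symm
  have hblt : (b : ℤ) % q < q := Int.emod_lt_of_pos _ hq'
  have eb : (-(b : ℤ)) % (q : ℤ) = q - (b : ℤ) % q := by
    have e : -(b : ℤ) = (q - (b : ℤ) % q) + q * (-(b / q) - 1) := by
      linear_combination Int.mul_ediv_add_emod (b : ℤ) q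
    rw [e, Int.add_mul_emod_self_left, Int.emod_eq_of_lt (by omega) (by omega)]
  rw [ei, eh, eb]
  simp only [dSeq_eq_ediv]
  have r0 := Int.mul_ediv_add_emod (b : ℤ) q
  have rj := Int.mul_ediv_add_emod ((1 + (j : ℤ)) * b) q
  have raj := Int.mul_ediv_add_emod ((1 + ((a + j : ℕ) : ℤ)) * b) q
  have ra := Int.mul_ediv_add_emod ((1 + (a : ℤ)) * b) q
  have ran := Int.emod_nonneg ((1 + (a : ℤ)) * b) hq'.ne'
  have ralt := Int.emod_lt_of_pos ((1 + (a : ℤ)) * b) hq'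
  rw [show (1 + ((0 : ℕ) : ℤ)) * (b : ℤ) = b by push_cast; ring]
  generalize (b : ℤ) / q = d0 at *
  generalize ((1 + (j : ℤ)) * b) / q = dj at *
  generalize ((1 + ((a + j : ℕ) : ℤ)) * b) / q = daj at *
  generalize ((1 + (a : ℤ)) * b) / q = da at *
  have key : (q : ℤ) - (b : ℤ) % q + ((1 + (j : ℤ)) * b) % q
      - ((1 + ((a + j : ℕ) : ℤ)) * b) % q
      = q * (1 + d0 - dj + daj - da) - ((1 + (a : ℤ)) * b) % q := by
    push_cast at raj ⊢
    linear_combination rj - raj - r0 + ra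
  rw [key]
  constructor
  · intro hle
    nlinarith
  · intro hpos
    have : 0 < 1 + d0 - dj + daj - da := by
      by_contra hneg
      nlinarith
    omega

lemma dSeq_mono (q b : ℕ) : Monotone (dSeq q b) := by
  intro x y hxy
  rw [dSeq_eq_ediv, dSeq_eq_ediv]
  rcases Nat.eq_zero_or_pos q with rfl | hq
  · simp
  · exact Int.ediv_le_ediv (by exact_mod_cast hq) (by gcongr)

lemma wSeq_eq_iff {p n b j : ℕ} :
    wSeq p n (b : ℤ) j = dSeq (p ^ (n + 1)) (b : ℤ) j - dSeq (p ^ (n + 1)) (b : ℤ) 0 ↔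
      ∀ a ≤ p ^ (n + 1) - 1, pLE p n a (p ^ (n + 1) - 1 - j) →
        dSeq (p ^ (n + 1)) b j - dSeq (p ^ (n + 1)) b 0
          ≤ dSeq (p ^ (n + 1)) b (a + j) - dSeq (p ^ (n + 1)) b a := by
  unfold wSeq
  constructor
  · intro hw a ha hle
    rw [← hw]
    refine csInf_le ⟨0, ?_⟩ ⟨a, ha, hle, rfl⟩
    rintro m ⟨c, -, -, rfl⟩
    exact sub_nonneg.2 (dSeq_mono _ _ (Nat.le_add_right c j))
  · intro hall
    refine IsLeast.csInf_eq ⟨⟨0, Nat.zero_le _, ?_, by rw [zero_add]⟩, ?_⟩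
    · intro s _
      simp [digit]
    · rintro m ⟨a, ha, hle, rfl⟩
      exact hall a ha hle

/-- Let `p` be prime, `n ≥ 0`, `q = p^(n+1)`, and let `b` be a
positive integer coprime to `p`.  With `d_a = ⌊(1+a)·b/q⌋` and
`w_j = min{ d_{a+j} - d_a : 0 ≤ a ≤ q-1, a ⪯ q-1-j }`, one has `w_j = d_j - d_0` for
all `0 ≤ j ≤ q-1` if and only if `r(-b) + r(-ib) - r(-hb) > 0` for all integers
`h, i, j` with `0 ≤ h ≤ i ≤ j < q` satisfying `i + j = q - 1 + h` and
`binomial(i,h) ≢ 0 (mod p)`.  (Here `r(x) = x % q` is the least non-negative residue.) -/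
theorem w_eq_iff_residue_condition
    (p : ℕ) (hp : p.Prime) (n : ℕ) (b : ℕ) (hb : 0 < b) (hbp : b.Coprime p) :
    (∀ j ≤ p ^ (n + 1) - 1,
        wSeq p n (b : ℤ) j = dSeq (p ^ (n + 1)) (b : ℤ) j - dSeq (p ^ (n + 1)) (b : ℤ) 0) ↔
    (∀ h i j : ℕ, h ≤ i → i ≤ j → j < p ^ (n + 1) → i + j = p ^ (n + 1) - 1 + h →
      ¬ p ∣ i.choose h →
      0 < (-(b : ℤ)) % (p ^ (n + 1) : ℤ) + (-((i : ℤ) * (b : ℤ))) % (p ^ (n + 1) : ℤ)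
          - (-((h : ℤ) * (b : ℤ))) % (p ^ (n + 1) : ℤ)) := by
  have hq : 0 < p ^ (n + 1) := pow_pos hp.pos _
  have hqb : ¬ p ^ (n + 1) ∣ b := fun hd =>
    hp.one_lt.ne' (Nat.eq_one_of_dvd_coprimes hbp
      ((dvd_pow_self p (Nat.succ_ne_zero n)).trans hd) dvd_rfl)
  simp only [wSeq_eq_iff]
  constructor
  · intro H h i j hhi hij hj hsum hch
    have key := (dSeq_le_iff (b := b) (a := i - h) (j := p ^ (n + 1) - 1 - i) (h := h) (i := i)
      hqb hq (by omega) (by omega)).1 (H _ (by omega) (i - h) (by omega) ?_)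
    · push_cast at key
      exact key
    · rw [show p ^ (n + 1) - 1 - (p ^ (n + 1) - 1 - i) = i by omega,
        pLE_iff_not_dvd_choose hp (by omega) (by omega), Nat.choose_symm hhi]
      exact hch
  · intro H
    -- The case `a ≤ j` is the residue condition for `i = q-1-j`, `h = i-a`.
    have main : ∀ a j, a ≤ j → a + j ≤ p ^ (n + 1) - 1 →
        ¬ p ∣ (p ^ (n + 1) - 1 - j).choose a →
        dSeq (p ^ (n + 1)) b j - dSeq (p ^ (n + 1)) b 0
          ≤ dSeq (p ^ (n + 1)) b (a + j) - dSeq (p ^ (n + 1)) b a := by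
      intro a j haj hle hch
      refine (dSeq_le_iff (h := p ^ (n + 1) - 1 - j - a) (i := p ^ (n + 1) - 1 - j)
        hqb hq (by omega) (by omega)).2 ?_
      have key := H (p ^ (n + 1) - 1 - j - a) (p ^ (n + 1) - 1 - j) (p ^ (n + 1) - 1 - a)
        (by omega) (by omega) (by omega) (by omega)
        (by rwa [Nat.choose_symm (by omega)])
      rw [Nat.cast_pow p (n + 1)]
      exact key
    intro j hj a ha hle
    rw [pLE_iff_not_dvd_choose hp (by omega) (by omega)] at hle
    have haj : a ≤ p ^ (n + 1) - 1 - j := by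
      by_contra hlt
      exact hle (by rw [Nat.choose_eq_zero_of_lt (by omega)]; exact dvd_zero p)
    rcases le_total a j with h1 | h1
    · exact main a j h1 (by omega) hle
    · have := main j a h1 (by omega) (not_dvd_choose_swap hp (by omega) hle)
      rw [add_comm j a] at this
      linarith
end

section
/- Let p be a prime, n ≥ 0, q = p^{n+1}, and let b be a positive integer coprime to p. Set d_a = ⌊(1+a)·b/q⌋. Let x, y be integers with 0 ≤ y ≤ x and x + y ≤ q−1, and set i = q−1−x and h = q−1−x−y. Then d_{x+y} − d_x ≥ d_y − d_0 if and only if r(−b) + r(−ib) − r(−hb) > 0. -/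
theorem emod_neg_of_not_dvd {q b : ℤ} (hq : 0 < q) (h : ¬ q ∣ b) : (-b) % q = q - b % q := by
  have h0 : b % q ≠ 0 := fun h' => h (Int.dvd_of_emod_eq_zero h')
  have h1 := Int.emod_nonneg b hq.ne'
  have h2 := Int.emod_lt_of_pos b hq
  have h3 := Int.mul_ediv_add_emod b q
  rw [show -b = (q - b % q) + q * (-(b / q) - 1) by linear_combination h3,
    Int.add_mul_emod_self_left, Int.emod_eq_of_lt (by omega) (by omega)]

/-- Let `p` be prime, `n ≥ 0`, `q = p^(n+1)`, and let `b` be a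
positive integer coprime to `p`.  Set `d_a = ⌊(1+a)·b/q⌋`.  Let `x, y` be integers
with `0 ≤ y ≤ x` and `x + y ≤ q-1`, and set `i = q-1-x` and `h = q-1-x-y`.  Then
`d_{x+y} - d_x ≥ d_y - d_0` if and only if `r(-b) + r(-ib) - r(-hb) > 0`, where
`r(x) = x % q` is the least non-negative residue modulo `q`. -/
theorem d_inequality_iff_residue_condition
    (p : ℕ) (hp : p.Prime) (n : ℕ) (b : ℕ) (hb : 0 < b) (hbp : b.Coprime p)
    (x y : ℕ) (hyx : y ≤ x) (hxy : x + y ≤ p ^ (n + 1) - 1) :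
    dSeq (p ^ (n + 1)) (b : ℤ) y - dSeq (p ^ (n + 1)) (b : ℤ) 0 ≤
      dSeq (p ^ (n + 1)) (b : ℤ) (x + y) - dSeq (p ^ (n + 1)) (b : ℤ) x ↔
    0 < (-(b : ℤ)) % (p ^ (n + 1) : ℤ)
        + (-(((p ^ (n + 1) - 1 - x : ℕ) : ℤ) * (b : ℤ))) % (p ^ (n + 1) : ℤ)
        - (-(((p ^ (n + 1) - 1 - x - y : ℕ) : ℤ) * (b : ℤ))) % (p ^ (n + 1) : ℤ) := by
  have hq0 : 0 < p ^ (n + 1) := pow_pos hp.pos _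
  have hdvd : ¬ ((p ^ (n + 1) : ℕ) : ℤ) ∣ (b : ℤ) := by
    intro h
    have h1 : p ∣ b := (dvd_pow_self p n.succ_ne_zero).trans (Int.natCast_dvd_natCast.mp h)
    exact hp.one_lt.ne' (Nat.dvd_one.mp (hbp ▸ Nat.dvd_gcd h1 dvd_rfl))
  have hcast : (p : ℤ) ^ (n + 1) = ((p ^ (n + 1) : ℕ) : ℤ) := by push_cast; rfl
  rw [hcast]
  generalize p ^ (n + 1) = q at *
  have hq : (0 : ℤ) < q := by exact_mod_cast hq0
  have hi : (-(((q - 1 - x : ℕ) : ℤ) * (b : ℤ))) % (q : ℤ) = ((1 + x : ℤ) * b) % q := by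
    have e : ((q - 1 - x : ℕ) : ℤ) = q - 1 - x := by omega
    rw [e, show -(((q : ℤ) - 1 - x) * b) = (1 + x) * b + q * (-b) by ring,
      Int.add_mul_emod_self_left]
  have hh : (-(((q - 1 - x - y : ℕ) : ℤ) * (b : ℤ))) % (q : ℤ)
      = ((1 + (x + y) : ℤ) * b) % q := by
    have e : ((q - 1 - x - y : ℕ) : ℤ) = q - 1 - x - y := by omega
    rw [e, show -(((q : ℤ) - 1 - x - y) * b) = (1 + (x + y)) * b + q * (-b) by ring,
      Int.add_mul_emod_self_left]
  rw [hi, hh, emod_neg_of_not_dvd hq hdvd]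
  simp only [dSeq, Int.fdiv_eq_ediv_of_nonneg _ hq.le, Nat.cast_add, Nat.cast_zero, add_zero,
    one_mul]
  have e0 := Int.mul_ediv_add_emod (b : ℤ) q
  have ex := Int.mul_ediv_add_emod ((1 + x : ℤ) * b) q
  have ey := Int.mul_ediv_add_emod ((1 + y : ℤ) * b) q
  have exy := Int.mul_ediv_add_emod ((1 + (x + y) : ℤ) * b) q
  have hy0 := Int.emod_nonneg ((1 + y : ℤ) * b) hq.ne'
  have hy1 := Int.emod_lt_of_pos ((1 + y : ℤ) * b) hq
  generalize (b : ℤ) / q = d0 at *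
  generalize ((1 + x : ℤ) * b) / q = dx at *
  generalize ((1 + y : ℤ) * b) / q = dy at *
  generalize ((1 + (x + y) : ℤ) * b) / q = dxy at *
  generalize (b : ℤ) % q = r0 at *
  generalize ((1 + x : ℤ) * b) % q = rx at *
  generalize ((1 + y : ℤ) * b) % q = ry at *
  generalize ((1 + (x + y) : ℤ) * b) % q = rxy at *
  have key : (q : ℤ) * (dxy - dx - dy + d0) = rx + ry - r0 - rxy := by
    linear_combination exy - ex - ey + e0
  constructor
  · intro h
    have : 0 ≤ (q : ℤ) * (dxy - dx - dy + d0) := mul_nonneg hq.le (by linarith)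
    linarith
  · intro h
    by_contra hc
    have h1 : dxy - dx - dy + d0 ≤ -1 := by omega
    have := mul_le_mul_of_nonneg_left h1 hq.le
    linarith
end
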